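/- The subgroup D¹_1 = {x_{a,b} ∈ D¹ : v_D(x_{a,b} − 1) ≥ 1} is normal in D¹, and the map x_{a,b} ↦ (a mod P_E) induces a group isomorphism from D¹/D¹_1 onto the norm-one subgroup {u ∈ k_E^× : u^{p+1} = 1} of the multiplicative group of the residue field k_E of E. In particular D¹/D¹_1 is cyclic of order q + 1, where q = p is the residue cardinality of F. -/

import Mathlib

noncomputable section
open Matrix

/-- The image of `p` in `E`. -/
def pE (p : ℕ) [Fact p.Prime] (E : Type) [Field E] [Algebra ℚ_[p] E] : E :=
  algebraMap ℚ_[p] E (p : ℚ_[p])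

/-- The ring of integers `O_E = ℤ_p + ℤ_p·α` of the unramified quadratic extension
`E = F(α)`, as a set. -/
def OE (p : ℕ) [Fact p.Prime] (E : Type) [Field E] [Algebra ℚ_[p] E] (α : E) : Set E :=
  {x | ∃ a b : ℤ_[p],
    x = algebraMap ℚ_[p] E (a : ℚ_[p]) + algebraMap ℚ_[p] E (b : ℚ_[p]) * α}

/-- The element `x_{a,b} = !![a, b; p·conj b, conj a]` of the quaternion division algebra
`D ⊆ M₂(E)`. -/
def qmat (p : ℕ) [Fact p.Prime] (E : Type) [Field E] [Algebra ℚ_[p] E]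
    (conj : E → E) (a b : E) : Matrix (Fin 2) (Fin 2) E :=
  !![a, b; pE p E * conj b, conj a]

/-- The uniformizer `δ = x_{0,1}` of `D`, with `δ² = p`. -/
def deltaM (p : ℕ) [Fact p.Prime] (E : Type) [Field E] [Algebra ℚ_[p] E] :
    Matrix (Fin 2) (Fin 2) E :=
  !![0, 1; pE p E, 0]

/-- The maximal order `O_D = {x_{a,b} : a, b ∈ O_E}` of `D`, as a set. -/
def ODset (p : ℕ) [Fact p.Prime] (E : Type) [Field E] [Algebra ℚ_[p] E]
    (α : E) (conj : E → E) : Set (Matrix (Fin 2) (Fin 2) E) :=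
  {m | ∃ a b : E, a ∈ OE p E α ∧ b ∈ OE p E α ∧ m = qmat p E conj a b}

/-- The norm-one group `D¹ = {x ∈ D : det x = 1}`, as a set. -/
def D1set (p : ℕ) [Fact p.Prime] (E : Type) [Field E] [Algebra ℚ_[p] E]
    (conj : E → E) : Set (Matrix (Fin 2) (Fin 2) E) :=
  {m | (∃ a b : E, m = qmat p E conj a b) ∧ m.det = 1}

/-- `vDge p E α conj r m` says `v_D(m) ≥ r`, i.e. `m ∈ δ^r·O_D = P_D^r`. -/
def vDge (p : ℕ) [Fact p.Prime] (E : Type) [Field E] [Algebra ℚ_[p] E]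
    (α : E) (conj : E → E) (r : ℕ) (m : Matrix (Fin 2) (Fin 2) E) : Prop :=
  ∃ yy ∈ ODset p E α conj, m = deltaM p E ^ r * yy

/-- `x ∈ P_E = p·O_E`. -/
def inPE (p : ℕ) [Fact p.Prime] (E : Type) [Field E] [Algebra ℚ_[p] E]
    (α : E) (x : E) : Prop :=
  ∃ c ∈ OE p E α, x = pE p E * c

/-!
Write `N` for the norm of `E/F`. An element `x_{a,b}` of `D¹` satisfies `N a - p N b = 1`. Since
`E/F` is unramified, `N` is anisotropic modulo `p`, so clearing denominators and dividing out one
factor `p` at a time shows that `a` and `b` are integral: `D¹` is the norm-one group of the maximal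
order `O_E ⊕ O_E δ`. The upper left entry of a product is `a a' + p b b̄'`, hence reducing `a`
modulo `p` is a homomorphism to `k_Eˣ`. Its image lies in the elements of norm one, which are those
with `u ^ (q + 1) = 1`, because the norm of `k_E` over the field of `q` elements is
`u ↦ u ^ (q + 1)`. Conversely, if `x ∈ O_E` lifts `u` of norm one, then `N x ≡ 1` has a square root
`c ≡ 1` by Hensel's lemma, and `c⁻¹ x` is a lift of norm exactly one. Finally
`x_{a,b} - 1 ∈ δ O_D` says exactly that `a ≡ 1`, so the kernel is `D¹₁`.
-/

open IsLocalRing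

section QuadraticMap

open QuadraticAlgebra

variable {R S : Type*} [CommRing R] [CommRing S] {a b : R}

/-- The map `R[ω] → S[ω]` of quadratic algebras `ω² = a + bω` induced by a ring homomorphism
`f : R → S`; for the residue map of a local ring it is reduction modulo the maximal ideal. -/
def quadraticMap (f : R →+* S) (a b : R) :
    QuadraticAlgebra R a b →+* QuadraticAlgebra S (f a) (f b) where
  toFun x := ⟨f x.re, f x.im⟩
  map_one' := by ext <;> simp
  map_zero' := by ext <;> simp
  map_mul' x y := by ext <;> simp
  map_add' x y := by ext <;> simp

@[simp]
lemma quadraticMap_algebraMap (f : R →+* S) (r : R) :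
    quadraticMap f a b (algebraMap R _ r) = algebraMap S _ (f r) := by
  ext <;> simp [quadraticMap]

lemma quadraticMap_injective {f : R →+* S} (hf : Function.Injective f) :
    Function.Injective (quadraticMap f a b) := fun _ _ h ↦
  QuadraticAlgebra.ext (hf (congrArg QuadraticAlgebra.re h)) (hf (congrArg QuadraticAlgebra.im h))

lemma quadraticMap_surjective {f : R →+* S} (hf : Function.Surjective f) :
    Function.Surjective (quadraticMap f a b) := by
  rintro ⟨x, y⟩
  obtain ⟨x, rfl⟩ := hf x
  obtain ⟨y, rfl⟩ := hf y
  exact ⟨⟨x, y⟩, rfl⟩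

lemma norm_quadraticMap (f : R →+* S) (x : QuadraticAlgebra R a b) :
    (quadraticMap f a b x).norm = f x.norm := by
  simp [QuadraticAlgebra.norm_def, quadraticMap]

lemma quadraticMap_eq_zero_iff_dvd {f : R →+* S} {ϖ : R} (hf : ∀ r, f r = 0 ↔ ϖ ∣ r)
    {x : QuadraticAlgebra R a b} :
    quadraticMap f a b x = 0 ↔ algebraMap R (QuadraticAlgebra R a b) ϖ ∣ x := by
  rw [algebraMap_dvd_iff, ← hf, ← hf, QuadraticAlgebra.ext_iff]
  rfl

lemma quadraticLift_injective {K A : Type*} [Field K] [Ring A] [Algebra K A] {a b : K}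
    (u : {u : A // u * u = a • 1 + b • u}) (hu : u.1 ∉ Set.range (algebraMap K A)) :
    Function.Injective (QuadraticAlgebra.lift u) := by
  rw [injective_iff_map_eq_zero]
  intro x hx
  replace hx : x.re • (1 : A) + x.im • u.1 = 0 := hx
  have him : x.im = 0 := by
    by_contra h
    refine hu ⟨-(x.im⁻¹ * x.re), ?_⟩
    rw [Algebra.algebraMap_eq_smul_one, neg_smul, mul_smul, eq_neg_of_add_eq_zero_left hx,
      smul_neg, neg_neg, inv_smul_smul₀ h]
  have : Nontrivial A :=
    not_subsingleton_iff_nontrivial.mp fun _ ↦ hu ⟨0, Subsingleton.elim _ _⟩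
  exact QuadraticAlgebra.ext (by simpa [him] using hx) him

lemma algebraNorm_eq_norm (x : QuadraticAlgebra R a b) : Algebra.norm R x = x.norm := by
  rw [← det_toLinearMap_eq_norm]
  rfl

end QuadraticMap

section FiniteField

instance {T : Type*} [Finite T] (a b : T) : Finite (QuadraticAlgebra T a b) :=
  .of_equiv _ (QuadraticAlgebra.equivProd a b).symm

lemma card_quadraticAlgebra_sub_one {T : Type*} (a b : T) :
    Nat.card (QuadraticAlgebra T a b) - 1 = (Nat.card T + 1) * (Nat.card T - 1) := by
  rw [Nat.card_congr (QuadraticAlgebra.equivProd a b), Nat.card_prod, ← sq]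
  simpa using Nat.sq_sub_sq (Nat.card T) 1

variable {k : Type*} [Field k] [Finite k]

lemma exists_isPrimitiveRoot_of_dvd_card_sub_one {n : ℕ} (hn : n ∣ Nat.card k - 1) :
    ∃ ζ : k, IsPrimitiveRoot ζ n := by
  obtain ⟨ζ, hζ⟩ := IsCyclic.exists_ofOrder_eq_natCard (α := kˣ)
  obtain ⟨d, hd⟩ := hn
  have hζ' : IsPrimitiveRoot ζ (d * n) := by
    rw [mul_comm, ← hd, ← Nat.card_units, ← hζ]
    exact .orderOf ζ
  have hpos : 0 < d * n := by
    rw [mul_comm, ← hd]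
    exact Nat.sub_pos_of_lt Finite.one_lt_card
  exact ⟨_, IsPrimitiveRoot.coe_units_iff.mpr (hζ'.pow hpos rfl)⟩

variable {a b : k} [Fact (∀ r : k, r ^ 2 ≠ a + b * r)]

lemma pow_card_add_one_eq_algebraMap_norm (x : QuadraticAlgebra k a b) :
    x ^ (Nat.card k + 1) = algebraMap k _ x.norm := by
  rw [← algebraNorm_eq_norm, FiniteField.algebraMap_norm_eq_pow, card_quadraticAlgebra_sub_one,
    Nat.mul_div_cancel _ (Nat.sub_pos_of_lt Finite.one_lt_card)]

lemma pow_card_add_one_eq_one_iff {x : QuadraticAlgebra k a b} :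
    x ^ (Nat.card k + 1) = 1 ↔ x.norm = 1 := by
  rw [pow_card_add_one_eq_algebraMap_norm, ← map_one (algebraMap k _),
    QuadraticAlgebra.algebraMap_inj]

lemma exists_isPrimitiveRoot_card_add_one :
    ∃ ζ : QuadraticAlgebra k a b, IsPrimitiveRoot ζ (Nat.card k + 1) :=
  exists_isPrimitiveRoot_of_dvd_card_sub_one ⟨_, card_quadraticAlgebra_sub_one a b⟩

end FiniteField

section Henselian

open Polynomial

variable {R : Type*} [CommRing R] [IsLocalRing R] [HenselianRing R (maximalIdeal R)]

lemma exists_sq_eq_of_residue_sq_eq (h2 : IsUnit (2 : R)) {u w : R}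
    (hw : IsUnit w) (h : residue R w ^ 2 = residue R u) :
    ∃ c : R, c ^ 2 = u ∧ residue R c = residue R w := by
  have hroot : (X ^ 2 - C u).eval w ∈ maximalIdeal R := by
    rw [← residue_eq_zero_iff]
    simp [h]
  have hsimple : IsUnit (residue R ((X ^ 2 - C u).derivative.eval w)) := by
    refine IsUnit.map _ ?_
    simpa [one_add_one_eq_two] using h2.mul hw
  obtain ⟨c, hc, hcw⟩ := HenselianRing.is_henselian (X ^ 2 - C u)
    (monic_X_pow_sub_C u two_ne_zero) w hroot hsimple
  rw [← residue_eq_zero_iff, map_sub, sub_eq_zero] at hcw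
  exact ⟨c, by simpa [sub_eq_zero] using hc, hcw⟩

lemma isSquare_of_isSquare_residue (h2 : IsUnit (2 : R)) {u : R} (hu : IsUnit u)
    (h : IsSquare (residue R u)) : IsSquare u := by
  obtain ⟨r, hr⟩ := h
  obtain ⟨w, rfl⟩ := residue_surjective r
  have hw : IsUnit w := by
    rw [← residue_ne_zero_iff_isUnit] at hu ⊢
    rintro h0
    simp [hr, h0] at hu
  obtain ⟨c, hc, -⟩ := exists_sq_eq_of_residue_sq_eq h2 hw (by rw [hr, sq])
  exact ⟨c, by rw [← hc, sq]⟩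

lemma sq_ne_residue_of_not_isSquare (h2 : IsUnit (2 : R)) {u : R} (hu : IsUnit u)
    (hsq : ¬ IsSquare u) (r : ResidueField R) : r ^ 2 ≠ residue R u + residue R 0 * r := by
  rw [map_zero, zero_mul, add_zero]
  exact fun h ↦ hsq (isSquare_of_isSquare_residue h2 hu ⟨r, by rw [← h, sq]⟩)

lemma exists_norm_eq_one_of_norm_residue_eq_one (h2 : IsUnit (2 : R)) {a b : R}
    {u : QuadraticAlgebra (ResidueField R) (residue R a) (residue R b)} (hu : u.norm = 1) :
    ∃ x : QuadraticAlgebra R a b, x.norm = 1 ∧ quadraticMap (residue R) a b x = u := by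
  obtain ⟨x, rfl⟩ := quadraticMap_surjective residue_surjective u
  rw [norm_quadraticMap] at hu
  obtain ⟨c, hc, hc1⟩ := exists_sq_eq_of_residue_sq_eq h2 (u := x.norm) isUnit_one
    (by simp [hu])
  rw [map_one] at hc1
  obtain ⟨c, rfl⟩ : IsUnit c := by
    rw [← residue_ne_zero_iff_isUnit, hc1]
    exact one_ne_zero
  have hcinv : residue R ↑c⁻¹ = 1 := by
    simp [hc1]
  refine ⟨algebraMap R _ ↑c⁻¹ * x, ?_, by simp [hcinv]⟩
  rw [map_mul, QuadraticAlgebra.norm_algebraMap, ← hc, ← mul_pow, c.inv_mul, one_pow]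

end Henselian

section Anisotropic

open QuadraticAlgebra

variable {R : Type*} [CommRing R] [IsDomain R] [IsDiscreteValuationRing R] {a b ϖ : R}

lemma residue_eq_zero_iff_dvd (hϖ : Irreducible ϖ) (r : R) : residue R r = 0 ↔ ϖ ∣ r := by
  rw [residue_eq_zero_iff, hϖ.maximalIdeal_eq, Ideal.mem_span_singleton]

variable [Fact (∀ r : ResidueField R, r ^ 2 ≠ residue R a + residue R b * r)]
  {x y : QuadraticAlgebra R a b}

lemma algebraMap_dvd_of_dvd_norm (hϖ : Irreducible ϖ) (h : ϖ ∣ x.norm) :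
    algebraMap R (QuadraticAlgebra R a b) ϖ ∣ x := by
  rw [← quadraticMap_eq_zero_iff_dvd (residue_eq_zero_iff_dvd hϖ), ← norm_eq_zero_iff_eq_zero,
    norm_quadraticMap]
  exact (residue_eq_zero_iff_dvd hϖ _).mpr h

lemma algebraMap_dvd_of_sq_dvd_norm_sub (hϖ : Irreducible ϖ)
    (h : ϖ ^ 2 ∣ x.norm - ϖ * y.norm) :
    algebraMap R (QuadraticAlgebra R a b) ϖ ∣ x ∧ algebraMap R (QuadraticAlgebra R a b) ϖ ∣ y := by
  have hx : algebraMap R (QuadraticAlgebra R a b) ϖ ∣ x := by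
    refine algebraMap_dvd_of_dvd_norm hϖ ((dvd_sub_left (dvd_mul_right ϖ y.norm)).mp ?_)
    exact (dvd_pow_self ϖ two_ne_zero).trans h
  refine ⟨hx, algebraMap_dvd_of_dvd_norm hϖ ?_⟩
  obtain ⟨x, rfl⟩ := hx
  rw [map_mul, QuadraticAlgebra.norm_algebraMap, dvd_sub_right (dvd_mul_right _ _), sq] at h
  exact (mul_dvd_mul_iff_left hϖ.ne_zero).mp h

lemma algebraMap_pow_dvd_of_pow_dvd_norm_sub (hϖ : Irreducible ϖ) (n : ℕ) :
    ∀ {x y : QuadraticAlgebra R a b}, (ϖ ^ n) ^ 2 ∣ x.norm - ϖ * y.norm →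
      algebraMap R (QuadraticAlgebra R a b) (ϖ ^ n) ∣ x ∧
        algebraMap R (QuadraticAlgebra R a b) (ϖ ^ n) ∣ y := by
  induction n with
  | zero => simp
  | succ n ih =>
    intro x y h
    obtain ⟨⟨x, rfl⟩, ⟨y, rfl⟩⟩ := algebraMap_dvd_of_sq_dvd_norm_sub hϖ
      ((pow_dvd_pow_of_dvd (dvd_pow_self ϖ n.succ_ne_zero) 2).trans h)
    have hfactor : (algebraMap R (QuadraticAlgebra R a b) ϖ * x).norm -
        ϖ * (algebraMap R (QuadraticAlgebra R a b) ϖ * y).norm =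
          ϖ ^ 2 * (x.norm - ϖ * y.norm) := by
      simp only [map_mul, QuadraticAlgebra.norm_algebraMap]
      ring
    rw [hfactor, pow_succ' ϖ, mul_pow, mul_dvd_mul_iff_left (pow_ne_zero 2 hϖ.ne_zero)] at h
    obtain ⟨hx, hy⟩ := ih h
    rw [pow_succ' ϖ, map_mul]
    exact ⟨mul_dvd_mul_left _ hx, mul_dvd_mul_left _ hy⟩

lemma algebraMap_dvd_of_sq_dvd_reducedNorm (hϖ : Irreducible ϖ) {c : R} (hc : c ≠ 0)
    (h : c ^ 2 ∣ x.norm - ϖ * y.norm) :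
    algebraMap R (QuadraticAlgebra R a b) c ∣ x ∧ algebraMap R (QuadraticAlgebra R a b) c ∣ y := by
  obtain ⟨n, hn⟩ := IsDiscreteValuationRing.associated_pow_irreducible hc hϖ
  have hn' := hn.map (algebraMap R (QuadraticAlgebra R a b))
  rw [hn'.dvd_iff_dvd_left, hn'.dvd_iff_dvd_left]
  exact algebraMap_pow_dvd_of_pow_dvd_norm_sub hϖ n ((hn.pow_pow (n := 2)).dvd_iff_dvd_left.mp h)

end Anisotropic

section Kernel

variable {G H : Type*} [Group G]

lemma map_mul_mul_eq_one_of_mul_eq_one [Monoid H] (φ : G →* H) {g h g' : G} (hh : φ h = 1)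
    (hg : g * g' = 1) : φ (g * h * g') = 1 := by
  rw [map_mul, map_mul, hh, mul_one, ← map_mul, hg, map_one]

lemma exists_generator_modulo_ker [CommRing H] [IsDomain H] (φ : G →* H) {n : ℕ} [NeZero n]
    {ζ : H} (hζ : IsPrimitiveRoot ζ n) (hφ : ∀ u, (∃ g, φ g = u) ↔ u ^ n = 1) :
    ∃ g, (∀ k, φ (g ^ k) = 1 ↔ n ∣ k) ∧ ∀ h, ∃ k < n, φ (h * (g ^ k)⁻¹) = 1 := by
  obtain ⟨g, rfl⟩ := (hφ ζ).mpr hζ.pow_eq_one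
  refine ⟨g, fun k ↦ by rw [map_pow, hζ.pow_eq_one_iff_dvd], fun h ↦ ?_⟩
  obtain ⟨k, hk, hgk⟩ := hζ.eq_pow_of_pow_eq_one ((hφ (φ h)).mp ⟨h, rfl⟩)
  exact ⟨k, hk, by rw [map_mul, ← hgk, ← map_pow, ← map_mul, mul_inv_cancel, map_one]⟩

end Kernel

section NormOneGroup

open QuadraticAlgebra

variable {R : Type*} [CommRing R] {a b : R}

/-- The element `x + yδ` of the quaternion order `O ⊕ Oδ` over the quadratic algebra `O = R[ω]`,
with `δ² = ϖ` and `δx = x̄δ`, as a matrix over `O`. -/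
def quaternionMatrix (ϖ : R) (x y : QuadraticAlgebra R a b) :
    Matrix (Fin 2) (Fin 2) (QuadraticAlgebra R a b) :=
  !![x, y; algebraMap R _ ϖ * star y, star x]

lemma det_quaternionMatrix (ϖ : R) (x y : QuadraticAlgebra R a b) :
    (quaternionMatrix ϖ x y).det = algebraMap R _ (x.norm - ϖ * y.norm) := by
  rw [quaternionMatrix, det_fin_two_of, map_sub, map_mul, algebraMap_norm_eq_mul_star,
    algebraMap_norm_eq_mul_star]
  ring

lemma quaternionMatrix_mul (ϖ : R) (x y x' y' : QuadraticAlgebra R a b) :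
    quaternionMatrix ϖ x y * quaternionMatrix ϖ x' y' =
      quaternionMatrix ϖ (x * x' + algebraMap R _ ϖ * (y * star y')) (x * y' + y * star x') := by
  have hϖ : star (algebraMap R (QuadraticAlgebra R a b) ϖ) = algebraMap R _ ϖ := by
    ext <;> simp
  simp only [quaternionMatrix, mul_fin_two, star_add, star_mul', star_star, hϖ]
  congrm !![?_, ?_; ?_, ?_] <;> ring

lemma adjugate_quaternionMatrix (ϖ : R) (x y : QuadraticAlgebra R a b) :
    (quaternionMatrix ϖ x y).adjugate = quaternionMatrix ϖ (star x) (-y) := by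
  simp [quaternionMatrix, adjugate_fin_two_of]

variable (a b) in
/-- The group of elements of reduced norm one in the quaternion order of `quaternionMatrix`. -/
def normOneGroup (ϖ : R) : Subgroup (SpecialLinearGroup (Fin 2) (QuadraticAlgebra R a b)) where
  carrier := {A | ∃ x y, (↑A : Matrix _ _ (QuadraticAlgebra R a b)) = quaternionMatrix ϖ x y}
  one_mem' := ⟨1, 0, by simp [quaternionMatrix, one_fin_two]⟩
  mul_mem' := by
    rintro A B ⟨x, y, hA⟩ ⟨x', y', hB⟩
    exact ⟨_, _, (congrArg₂ (· * ·) hA hB).trans (quaternionMatrix_mul ϖ x y x' y')⟩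
  inv_mem' := by
    rintro A ⟨x, y, hA⟩
    exact ⟨_, _, (congrArg adjugate hA).trans (adjugate_quaternionMatrix ϖ x y)⟩

namespace normOneGroup

variable {ϖ : R}

/-- The element of `normOneGroup` given by the coordinates `x`, `y` of `quaternionMatrix`. -/
def mk (x y : QuadraticAlgebra R a b) (h : x.norm - ϖ * y.norm = 1) : normOneGroup a b ϖ :=
  ⟨⟨quaternionMatrix ϖ x y, by rw [det_quaternionMatrix, h, map_one]⟩, x, y, rfl⟩

lemma exists_eq_mk (A : normOneGroup a b ϖ) : ∃ x y h, A = mk x y h := by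
  obtain ⟨A, x, y, hA⟩ := A
  have hdet := A.det_coe
  rw [hA, det_quaternionMatrix, ← map_one (algebraMap R _)] at hdet
  exact ⟨x, y, algebraMap_injective hdet, Subtype.ext (Subtype.ext hA)⟩

/-- Reduction `x + yδ ↦ f x` of the upper left entry, for `f : R → S` killing `ϖ = δ²`. -/
def reduction {S : Type*} [CommRing S] (f : R →+* S) (hf : f ϖ = 0) :
    normOneGroup a b ϖ →* QuadraticAlgebra S (f a) (f b) where
  toFun A := quadraticMap f a b (A.1 0 0)
  map_one' := by simp
  map_mul' A B := by
    obtain ⟨x, y, h, rfl⟩ := exists_eq_mk A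
    obtain ⟨x', y', h', rfl⟩ := exists_eq_mk B
    change quadraticMap f a b ((quaternionMatrix ϖ x y * quaternionMatrix ϖ x' y') 0 0) =
      quadraticMap f a b x * quadraticMap f a b x'
    simp [quaternionMatrix, hf]

lemma norm_reduction {S : Type*} [CommRing S] (f : R →+* S) (hf : f ϖ = 0)
    (A : normOneGroup a b ϖ) : (reduction f hf A).norm = 1 := by
  obtain ⟨x, y, h, rfl⟩ := exists_eq_mk A
  change (quadraticMap f a b x).norm = 1
  rw [norm_quadraticMap]
  simpa [hf] using congrArg f h

lemma reduction_apply {S : Type*} [CommRing S] (f : R →+* S) (hf : f ϖ = 0)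
    (A : normOneGroup a b ϖ) : reduction f hf A = quadraticMap f a b (A.1 0 0) := rfl

lemma exists_reduction_eq_iff_norm_eq_one [IsLocalRing R] [HenselianRing R (maximalIdeal R)]
    (h2 : IsUnit (2 : R)) (hϖ : residue R ϖ = 0)
    {u : QuadraticAlgebra (ResidueField R) (residue R a) (residue R b)} :
    (∃ A : normOneGroup a b ϖ, reduction (residue R) hϖ A = u) ↔ u.norm = 1 := by
  refine ⟨fun ⟨A, hA⟩ ↦ hA ▸ norm_reduction _ hϖ A, fun hu ↦ ?_⟩
  obtain ⟨x, hx, rfl⟩ := exists_norm_eq_one_of_norm_residue_eq_one h2 hu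
  exact ⟨mk x 0 (by simp [hx]), rfl⟩

theorem exists_reduction_eq_iff_pow_eq_one [IsLocalRing R] [HenselianRing R (maximalIdeal R)]
    [Finite (ResidueField R)] [Fact (∀ r : ResidueField R, r ^ 2 ≠ residue R a + residue R b * r)]
    (h2 : IsUnit (2 : R)) (hϖ : residue R ϖ = 0)
    {u : QuadraticAlgebra (ResidueField R) (residue R a) (residue R b)} :
    (∃ A : normOneGroup a b ϖ, reduction (residue R) hϖ A = u) ↔
      u ^ (Nat.card (ResidueField R) + 1) = 1 := by
  rw [exists_reduction_eq_iff_norm_eq_one h2, pow_card_add_one_eq_one_iff]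

end normOneGroup

end NormOneGroup

section Padic

variable {p : ℕ} [Fact p.Prime]

lemma natCard_residueField_padicInt : Nat.card (ResidueField ℤ_[p]) = p := by
  rw [Nat.card_congr PadicInt.residueField.toEquiv, Nat.card_zmod]

lemma isUnit_two_padicInt (hp : p ≠ 2) : IsUnit (2 : ℤ_[p]) := by
  rw [PadicInt.isUnit_iff, ← Nat.cast_ofNat, PadicInt.norm_natCast_eq_one_iff,
    Nat.coprime_primes Fact.out Nat.prime_two]
  exact hp

lemma residue_natCast_p : residue ℤ_[p] p = 0 :=
  (residue_eq_zero_iff_dvd PadicInt.irreducible_p _).mpr dvd_rfl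

variable {z : ℤ_[p]} {E : Type} [Field E] [Algebra ℚ_[p] E] {α : E}

/-- The embedding of `ℤ_p[√z]` in `E` sending `√z` to `α`, with image `O_E`. -/
def toE (hα : α * α = algebraMap ℚ_[p] E z) : QuadraticAlgebra ℤ_[p] z 0 →+* E :=
  have hα' : α * α = PadicInt.Coe.ringHom z • 1 + PadicInt.Coe.ringHom (0 : ℤ_[p]) • α := by
    rw [map_zero, zero_smul, add_zero, ← Algebra.algebraMap_eq_smul_one]
    exact hα
  (QuadraticAlgebra.lift ⟨α, hα'⟩).toRingHom.comp (quadraticMap PadicInt.Coe.ringHom z 0)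

variable (hα : α * α = algebraMap ℚ_[p] E z)

lemma toE_apply (x : QuadraticAlgebra ℤ_[p] z 0) :
    toE hα x = algebraMap ℚ_[p] E x.re + algebraMap ℚ_[p] E x.im * α := by
  rw [Algebra.algebraMap_eq_smul_one, ← Algebra.smul_def]
  rfl

lemma toE_algebraMap (c : ℤ_[p]) : toE hα (algebraMap ℤ_[p] _ c) = algebraMap ℚ_[p] E c := by
  simp [toE_apply]

lemma toE_natCast_p : toE hα (algebraMap ℤ_[p] _ (p : ℤ_[p])) = pE p E := by
  rw [toE_algebraMap, PadicInt.coe_natCast, pE]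

lemma toE_injective (hα0 : α ∉ Set.range (algebraMap ℚ_[p] E)) :
    Function.Injective (toE hα) :=
  (quadraticLift_injective _ hα0).comp (quadraticMap_injective Subtype.val_injective)

lemma OE_eq_range_toE : OE p E α = Set.range (toE hα) := by
  ext x
  constructor
  · rintro ⟨a, b, rfl⟩
    exact ⟨⟨a, b⟩, toE_apply hα _⟩
  · rintro ⟨x, rfl⟩
    exact ⟨x.re, x.im, toE_apply hα x⟩

lemma inPE_toE_iff (hα0 : α ∉ Set.range (algebraMap ℚ_[p] E)) {x : QuadraticAlgebra ℤ_[p] z 0} :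
    inPE p E α (toE hα x) ↔ quadraticMap (residue ℤ_[p]) z 0 x = 0 := by
  rw [quadraticMap_eq_zero_iff_dvd (residue_eq_zero_iff_dvd PadicInt.irreducible_p), inPE,
    OE_eq_range_toE hα, Set.exists_range_iff]
  simp only [← toE_natCast_p hα, ← map_mul, (toE_injective hα hα0).eq_iff]
  rfl

lemma inPE_toE_sub_toE_iff (hα0 : α ∉ Set.range (algebraMap ℚ_[p] E))
    {x y : QuadraticAlgebra ℤ_[p] z 0} : inPE p E α (toE hα x - toE hα y) ↔
      quadraticMap (residue ℤ_[p]) z 0 x = quadraticMap (residue ℤ_[p]) z 0 y := by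
  rw [← map_sub, inPE_toE_iff hα hα0, map_sub, sub_eq_zero]

lemma exists_common_denominator
    (hspan : ∀ x : E, ∃ a b : ℚ_[p], x = algebraMap ℚ_[p] E a + algebraMap ℚ_[p] E b * α)
    (x y : E) : ∃ c : ℤ_[p], c ≠ 0 ∧ ∃ x' y',
      (c : ℚ_[p]) • x = toE hα x' ∧ (c : ℚ_[p]) • y = toE hα y' := by
  obtain ⟨a, b, rfl⟩ := hspan x
  obtain ⟨a', b', rfl⟩ := hspan y
  obtain ⟨c, hc⟩ := IsLocalization.exist_integer_multiples_of_finite (nonZeroDivisors ℤ_[p])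
    ![a, b, a', b']
  choose r hr using hc
  have hcoe (i : Fin 4) : (r i : ℚ_[p]) = c * ![a, b, a', b'] i := hr i
  exact ⟨c, nonZeroDivisors.coe_ne_zero c, ⟨r 0, r 1⟩, ⟨r 2, r 3⟩,
    by simp [toE_apply, hcoe, Algebra.smul_def, mul_add, mul_assoc],
    by simp [toE_apply, hcoe, Algebra.smul_def, mul_add, mul_assoc]⟩

variable {conj : E →ₐ[ℚ_[p]] E}

lemma conj_toE (hconj : conj α = -α) (x : QuadraticAlgebra ℤ_[p] z 0) :
    conj (toE hα x) = toE hα (star x) := by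
  simp [toE_apply, hconj]

lemma map_toE_quaternionMatrix (hconj : conj α = -α) (x y : QuadraticAlgebra ℤ_[p] z 0) :
    (toE hα).mapMatrix (quaternionMatrix (p : ℤ_[p]) x y) =
      qmat p E conj (toE hα x) (toE hα y) := by
  ext i j
  fin_cases i <;> fin_cases j <;>
    simp [quaternionMatrix, qmat, conj_toE hα hconj, pE]

lemma det_qmat_toE (hconj : conj α = -α) (x y : QuadraticAlgebra ℤ_[p] z 0) :
    (qmat p E conj (toE hα x) (toE hα y)).det =
      toE hα (algebraMap ℤ_[p] _ (x.norm - p * y.norm)) := by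
  rw [← map_toE_quaternionMatrix hα hconj, ← RingHom.map_det, det_quaternionMatrix]

lemma smul_qmat (c : ℚ_[p]) (a b : E) :
    c • qmat p E conj a b = qmat p E conj (c • a) (c • b) := by
  simp [qmat]

/-- The embedding of the norm-one group of the maximal order `ℤ_p[√z] ⊕ ℤ_p[√z]δ` in `M₂(E)`;
its image is `D¹`. -/
def quaternionEmbedding : normOneGroup z 0 (p : ℤ_[p]) →* Matrix (Fin 2) (Fin 2) E :=
  (toE hα).mapMatrix.toMonoidHom.comp
    (SpecialLinearGroup.coeMonoidHom.comp (normOneGroup z 0 (p : ℤ_[p])).subtype)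

lemma quaternionEmbedding_apply_zero_zero (A : normOneGroup z 0 (p : ℤ_[p])) :
    quaternionEmbedding hα A 0 0 = toE hα (A.1 0 0) := rfl

lemma quaternionEmbedding_mk (hconj : conj α = -α) {x y : QuadraticAlgebra ℤ_[p] z 0}
    (h : x.norm - p * y.norm = 1) :
    quaternionEmbedding hα (normOneGroup.mk x y h) = qmat p E conj (toE hα x) (toE hα y) :=
  map_toE_quaternionMatrix hα hconj x y

lemma quaternionEmbedding_injective (hα0 : α ∉ Set.range (algebraMap ℚ_[p] E)) :
    Function.Injective (quaternionEmbedding hα) :=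
  (Matrix.map_injective (toE_injective hα hα0)).comp
    (Subtype.val_injective.comp Subtype.val_injective)

theorem D1set_eq_range_quaternionEmbedding (hα0 : α ∉ Set.range (algebraMap ℚ_[p] E))
    (hspan : ∀ x : E, ∃ a b : ℚ_[p], x = algebraMap ℚ_[p] E a + algebraMap ℚ_[p] E b * α)
    (hconj : conj α = -α)
    [Fact (∀ r : ResidueField ℤ_[p], r ^ 2 ≠ residue ℤ_[p] z + residue ℤ_[p] 0 * r)] :
    D1set p E conj = Set.range (quaternionEmbedding hα) := by
  ext m
  constructor
  · rintro ⟨⟨x, y, rfl⟩, hdet⟩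
    obtain ⟨c, hc, x', y', hx, hy⟩ := exists_common_denominator hα hspan x y
    have hnorm : x'.norm - p * y'.norm = c ^ 2 := by
      apply QuadraticAlgebra.algebraMap_injective (a := z) (b := 0)
      apply toE_injective hα hα0
      rw [← det_qmat_toE hα hconj, ← hx, ← hy, ← smul_qmat, det_smul_of_tower, hdet,
        toE_algebraMap]
      simp [Algebra.smul_def]
    obtain ⟨⟨x', rfl⟩, ⟨y', rfl⟩⟩ :=
      algebraMap_dvd_of_sq_dvd_reducedNorm PadicInt.irreducible_p hc hnorm.symm.dvd
    have hcancel {w : E} {w' : QuadraticAlgebra ℤ_[p] z 0}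
        (hw : (c : ℚ_[p]) • w = toE hα (algebraMap ℤ_[p] _ c * w')) : w = toE hα w' := by
      rw [map_mul, toE_algebraMap, ← Algebra.smul_def] at hw
      exact smul_right_injective E (PadicInt.coe_ne_zero.mpr hc) hw
    simp only [map_mul, QuadraticAlgebra.norm_algebraMap] at hnorm
    refine ⟨normOneGroup.mk x' y' (mul_left_cancel₀ (pow_ne_zero 2 hc) ?_), ?_⟩
    · linear_combination hnorm
    · rw [quaternionEmbedding_mk hα hconj, hcancel hx, hcancel hy]
  · rintro ⟨A, rfl⟩
    obtain ⟨x, y, h, rfl⟩ := normOneGroup.exists_eq_mk A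
    rw [quaternionEmbedding_mk hα hconj]
    exact ⟨⟨_, _, rfl⟩, by rw [det_qmat_toE hα hconj, h, map_one, map_one]⟩

lemma deltaM_mul_qmat (a b : E) : deltaM p E * qmat p E conj a b =
    !![pE p E * conj b, conj a; pE p E * a, pE p E * b] := by
  simp [deltaM, qmat]

lemma vDge_one_qmat_toE_iff (hconj : conj α = -α) {x y : QuadraticAlgebra ℤ_[p] z 0} :
    vDge p E α conj 1 (qmat p E conj (toE hα x) (toE hα y)) ↔ inPE p E α (toE hα x) := by
  simp only [vDge, ODset, inPE, OE_eq_range_toE hα, pow_one]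
  constructor
  · rintro ⟨_, ⟨_, _, -, ⟨w, rfl⟩, rfl⟩, h⟩
    rw [deltaM_mul_qmat, conj_toE hα hconj w] at h
    exact ⟨_, ⟨star w, rfl⟩, congrFun₂ h 0 0⟩
  · rintro ⟨_, ⟨w, rfl⟩, hx⟩
    refine ⟨_, ⟨_, _, ⟨star y, rfl⟩, ⟨star w, rfl⟩, rfl⟩, ?_⟩
    rw [deltaM_mul_qmat, hx]
    simp [qmat, conj_toE hα hconj, pE]

lemma vDge_one_quaternionEmbedding_sub_one_iff (hα0 : α ∉ Set.range (algebraMap ℚ_[p] E))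
    (hconj : conj α = -α) (A : normOneGroup z 0 (p : ℤ_[p])) :
    vDge p E α conj 1 (quaternionEmbedding hα A - 1) ↔
      normOneGroup.reduction (residue ℤ_[p]) residue_natCast_p A = 1 := by
  obtain ⟨x, y, h, rfl⟩ := normOneGroup.exists_eq_mk A
  have hsub : qmat p E conj (toE hα x) (toE hα y) - 1 =
      qmat p E conj (toE hα (x - 1)) (toE hα y) := by
    simp [qmat, one_fin_two]
  rw [quaternionEmbedding_mk hα hconj, hsub, vDge_one_qmat_toE_iff hα hconj, inPE_toE_iff hα hα0,
    map_sub, map_one, sub_eq_zero]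
  rfl

end Padic

/-- `D¹₁ = {x ∈ D¹ : v_D(x-1) ≥ 1}` is normal in `D¹`, and `x_{a,b} ↦ a mod P_E`
induces a group isomorphism of `D¹/D¹₁` onto the norm-one subgroup `{u ∈ k_Eˣ : u^{p+1} = 1}`
of the residue field `k_E = O_E/P_E`: the map lands in the norm-one subgroup, is
multiplicative mod `P_E`, has kernel exactly `D¹₁`, and is surjective; in particular
`D¹/D¹₁` is cyclic of order `q + 1 = p + 1`.  (Note that for `m = x_{a,b} ∈ D`, the entry
`m 0 0` is exactly `a`.) -/
theorem stmt8 (p : ℕ) [Fact p.Prime] (hp : p ≠ 2)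
    (z : ℤ_[p]ˣ) (hz : ¬ ∃ w : ℤ_[p], w * w = (z : ℤ_[p]))
    (E : Type) [Field E] [Algebra ℚ_[p] E] (α : E)
    (hα : α * α = algebraMap ℚ_[p] E ((z : ℤ_[p]) : ℚ_[p]))
    (hα0 : α ∉ Set.range (algebraMap ℚ_[p] E))
    (hspan : ∀ x : E, ∃ a b : ℚ_[p], x = algebraMap ℚ_[p] E a + algebraMap ℚ_[p] E b * α)
    (conj : E →ₐ[ℚ_[p]] E) (hconj : conj α = -α) :
    -- D¹₁ is normal in D¹
    (∀ g ∈ D1set p E conj, ∀ h ∈ D1set p E conj, vDge p E α conj 1 (h - 1) →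
      ∀ gi ∈ D1set p E conj, g * gi = 1 → vDge p E α conj 1 (g * h * gi - 1)) ∧
    -- the map x_{a,b} ↦ a mod P_E lands in the norm-one subgroup {u : u^{p+1} = 1} of k_Eˣ
    (∀ m ∈ D1set p E conj, inPE p E α (m 0 0 ^ (p + 1) - 1)) ∧
    -- it is multiplicative modulo P_E
    (∀ m ∈ D1set p E conj, ∀ m' ∈ D1set p E conj,
      inPE p E α ((m * m') 0 0 - m 0 0 * m' 0 0)) ∧
    -- its kernel is exactly D¹₁
    (∀ m ∈ D1set p E conj, (vDge p E α conj 1 (m - 1) ↔ inPE p E α (m 0 0 - 1))) ∧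
    -- it is surjective onto the norm-one subgroup
    (∀ a ∈ OE p E α, inPE p E α (a ^ (p + 1) - 1) →
      ∃ m ∈ D1set p E conj, inPE p E α (m 0 0 - a)) ∧
    -- D¹/D¹₁ is cyclic of order p + 1
    (∃ g ∈ D1set p E conj,
      (∀ k : ℕ, (vDge p E α conj 1 (g ^ k - 1) ↔ (p + 1) ∣ k)) ∧
      (∀ m ∈ D1set p E conj, ∃ k : ℕ, k < p + 1 ∧
        ∃ gi ∈ D1set p E conj, g ^ k * gi = 1 ∧ vDge p E α conj 1 (m * gi - 1))) := by
  have : Fact (∀ r : ResidueField ℤ_[p], r ^ 2 ≠ residue ℤ_[p] z + residue ℤ_[p] 0 * r) :=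
    ⟨sq_ne_residue_of_not_isSquare (isUnit_two_padicInt hp) z.isUnit
      fun ⟨w, hw⟩ ↦ hz ⟨w, hw.symm⟩⟩
  have hrange (u) := normOneGroup.exists_reduction_eq_iff_pow_eq_one (a := (z : ℤ_[p])) (b := 0)
    (isUnit_two_padicInt hp) residue_natCast_p (u := u)
  obtain ⟨ζ, hζ⟩ := exists_isPrimitiveRoot_card_add_one (a := residue ℤ_[p] z)
    (b := residue ℤ_[p] 0)
  simp only [natCard_residueField_padicInt] at hζ hrange
  obtain ⟨g, hgk, hg⟩ := exists_generator_modulo_ker _ hζ hrange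
  simp only [D1set_eq_range_quaternionEmbedding hα hα0 hspan hconj, OE_eq_range_toE hα,
    Set.forall_mem_range, Set.exists_range_iff, ← map_mul, ← map_pow,
    vDge_one_quaternionEmbedding_sub_one_iff hα hα0 hconj,
    map_eq_one_iff _ (quaternionEmbedding_injective hα hα0),
    quaternionEmbedding_apply_zero_zero, ← map_one (toE hα), inPE_toE_sub_toE_iff hα hα0]
  simp only [map_mul (quadraticMap _ _ _), map_pow (quadraticMap _ _ _),
    map_one (quadraticMap _ _ _), ← normOneGroup.reduction_apply _ residue_natCast_p]
  refine ⟨fun _ _ hB _ hAC ↦ map_mul_mul_eq_one_of_mul_eq_one _ hB hAC,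
    fun A ↦ (hrange _).mp ⟨A, rfl⟩, map_mul _, fun _ ↦ trivial, fun x ↦ (hrange _).mpr,
    g, hgk, fun A ↦ ?_⟩
  obtain ⟨k, hk, hker⟩ := hg A
  exact ⟨k, hk, _, mul_inv_cancel _, hker⟩
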